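/- For any nonrecursive sets A and B, there exists a set C that is not generically computable but is both generically A-computable and generically B-computable. Consequently, there are no minimal pairs for generic computability. -/

import Mathlib

open Filter

/-- The counting function: number of elements of `A` below `n`, divided by `n`. -/
noncomputable def partialDensity (A : Set ℕ) (n : ℕ) : ℝ := ((A ∩ Set.Iio n).ncard : ℝ) / n

/-- `A ⊆ ℕ` has density `d` if the partial densities tend to `d`. -/
def HasDensity (A : Set ℕ) (d : ℝ) : Prop :=
  Tendsto (partialDensity A) atTop (nhds d)

/-- `A ⊆ ℕ` has density 1. -/
def Density1 (A : Set ℕ) : Prop := HasDensity A 1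

/-- Partial recursive functions relative to an oracle `O : ℕ →. ℕ`
(relativization of `Nat.Partrec`). -/
inductive RecIn (O : ℕ →. ℕ) : (ℕ →. ℕ) → Prop
  | zero : RecIn O (pure 0)
  | succ : RecIn O ↑(Nat.succ)
  | left : RecIn O ↑fun n : ℕ => n.unpair.1
  | right : RecIn O ↑fun n : ℕ => n.unpair.2
  | oracle : RecIn O O
  | pair {f g} : RecIn O f → RecIn O g → RecIn O fun n => Nat.pair <$> f n <*> g n
  | comp {f g} : RecIn O f → RecIn O g → RecIn O fun n => g n >>= f
  | prec {f g} : RecIn O f → RecIn O g → RecIn O (Nat.unpaired fun a n =>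
      n.rec (f a) fun y IH => do let i ← IH; g (Nat.pair a (Nat.pair y i)))
  | rfind {f} : RecIn O f → RecIn O fun a =>
      Nat.rfind fun n => (fun m => m = 0) <$> f (Nat.pair a n)

open Classical in
/-- The characteristic function of a set of naturals, as a (total) partial function. -/
noncomputable def chi (A : Set ℕ) : ℕ →. ℕ :=
  fun n => Part.some (if n ∈ A then 1 else 0)

/-- `A` Turing-computes `B`. -/
def TuringComputes (A B : Set ℕ) : Prop := RecIn (chi A) (chi B)

/-- `A` generically computes `C`: some `{0,1}`-valued partial function, partial recursive
in `A`, has density-1 domain and is correct about membership in `C` wherever defined. -/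
def GenericallyComputes (A C : Set ℕ) : Prop :=
  ∃ φ : ℕ →. ℕ, RecIn (chi A) φ ∧
    Density1 {n | (φ n).Dom} ∧
    (∀ n v, v ∈ φ n → v = 0 ∨ v = 1) ∧
    (∀ n, 1 ∈ φ n → n ∈ C) ∧ (∀ n, 0 ∈ φ n → n ∉ C)

/-- `C` is generically computable (no oracle). -/
def GenericallyComputable (C : Set ℕ) : Prop :=
  ∃ φ : ℕ →. ℕ, Nat.Partrec φ ∧
    Density1 {n | (φ n).Dom} ∧
    (∀ n v, v ∈ φ n → v = 0 ∨ v = 1) ∧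
    (∀ n, 1 ∈ φ n → n ∈ C) ∧ (∀ n, 0 ∈ φ n → n ∉ C)

/-!
Binary strings are coded by positive integers, the string being the binary digits after the leading
`1`. Every number `x` gets primitive recursively a label, which is a string or `0`, depending on the
column `padicValNat 2 x = ⟨e, v⟩` and on the block `Nat.log 2 x`. With `Z = A ⊕ B`, the witness is
the set `C` of those `x` for which the label is an initial segment of `Z` and `φ_e(x) = 0`.

If the label of `x` is not an initial segment of `Z` because it disagrees with `A`, then `A` can see
that `x ∉ C`. So `A` generically computes `C` if in every column almost all labels disagree with
`A`; likewise for `B`.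

If `φ_e` halts at a number labelled by an initial segment of `Z`, then it is not correct for `C`. So
`φ_e` does not generically compute `C` if every `Z` extends such a label in some column `⟨e, v⟩`.
To achieve this, the strategy of this column removes a string once `φ_e` halts at a number which it
labels, and its labels are initial segments of an approximation to the leftmost path through `v`
along which nothing is removed. If there is no such path, then finitely many labels suffice to cover
all extensions of `v`. Otherwise the labels converge to a limit computable path, and the column
stays inactive unless it appears in the limit that the limit computable extensions of `v` disagree
with `A` and with `B`.

If the domain of `φ_e` has density 1, an active column cannot have an unremoved path. Suppose now
that the strategies for `φ_e` never remove an initial segment of `Z`. Then the sets with this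
property form a nonempty `Π⁰₁` class. Since `A` and `B` are not computable, this class has a member
`Y` which disagrees with both of them, and the column of a long enough initial segment of `Y` is
active and thus removes an initial segment of `Y`, a contradiction.
-/

namespace GenericComputability

section Primrec

variable {α : Type*} [Primcodable α] {f : α → ℕ} {p : α → ℕ → Prop}

lemma primrecPred_forall_lt (hf : Primrec f) (hp : PrimrecRel p) :
    PrimrecPred fun a => ∀ x < f a, p a x :=
  (hp.swap.forall_mem_list.comp (Primrec.list_range.comp hf) Primrec.id).of_eq fun a => by
    simp [Function.swap]

lemma primrecPred_exists_lt (hf : Primrec f) (hp : PrimrecRel p) :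
    PrimrecPred fun a => ∃ x < f a, p a x :=
  (hp.swap.exists_mem_list.comp (Primrec.list_range.comp hf) Primrec.id).of_eq fun a => by
    simp [Function.swap]

lemma natSInf_eq_iff {s : Set ℕ} {b : ℕ} :
    sInf s = b ↔ (b ∈ s ∧ ∀ k < b, k ∉ s) ∨ (b = 0 ∧ s = ∅) := by
  constructor
  · rintro rfl
    rcases s.eq_empty_or_nonempty with rfl | hs
    · simp
    · exact Or.inl ⟨Nat.sInf_mem hs, fun k hk => Nat.notMem_of_lt_sInf hk⟩
  · rintro (⟨hb, hmin⟩ | ⟨rfl, rfl⟩)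
    · exact le_antisymm (Nat.sInf_le hb) (not_lt.1 fun h => hmin _ h (Nat.sInf_mem ⟨b, hb⟩))
    · exact Nat.sInf_empty

lemma primrec_sInf (hf : Primrec f) (hp : PrimrecRel p) (hlt : ∀ a k, p a k → k < f a) :
    Primrec fun a => sInf {k | p a k} := by
  refine Primrec.of_graph ⟨f, hf, fun a => ?_⟩ ?_
  · rcases Set.eq_empty_or_nonempty {k | p a k} with h | h
    · simp [h]
    · exact (hlt a _ (Nat.sInf_mem h)).le
  · refine ((hp.and (primrecPred_forall_lt Primrec.snd
      (hp.not.comp (Primrec.fst.comp Primrec.fst) Primrec.snd).primrecRel)).or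
      ((Primrec.eq.comp Primrec.snd (Primrec.const 0)).and
        (primrecPred_forall_lt hf hp.not |>.comp Primrec.fst))).of_eq fun x => ?_
    refine (natSInf_eq_iff.trans (or_congr Iff.rfl (and_congr_right fun _ => ?_))).symm
    exact Set.eq_empty_iff_forall_notMem.trans
      ⟨fun h k _ => h k, fun h k hk => h k (hlt _ _ hk) hk⟩

lemma primrec_two_pow : Primrec fun n : ℕ => 2 ^ n :=
  (Primrec₂.unpaired'.1 Nat.Primrec.pow).comp (Primrec.const 2) Primrec.id

lemma primrec_shiftRight : Primrec₂ fun u i : ℕ => u >>> i :=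
  (Primrec.nat_div.comp Primrec.fst (primrec_two_pow.comp Primrec.snd)).of_eq fun x =>
    (Nat.shiftRight_eq_div_pow x.1 x.2).symm

lemma primrec_log : Primrec (Nat.log 2) := by
  refine Primrec.of_graph ⟨id, Primrec.id, Nat.log_le_self 2⟩ ?_
  refine (((Primrec.eq.comp Primrec.fst (Primrec.const 0)).and
    (Primrec.eq.comp Primrec.snd (Primrec.const 0))).or
    ((Primrec.eq.comp Primrec.fst (Primrec.const 0)).not.and
      ((Primrec.nat_le.comp (primrec_two_pow.comp Primrec.snd) Primrec.fst).and
        (Primrec.nat_lt.comp Primrec.fst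
          (primrec_two_pow.comp (Primrec.succ.comp Primrec.snd)))))).of_eq fun ⟨x, n⟩ => ?_
  rcases eq_or_ne x 0 with rfl | hx
  · simp [eq_comm]
  · simp [hx, Nat.log_eq_iff]

lemma primrec_padicValNat : Primrec (padicValNat 2) := by
  refine Primrec.of_graph ⟨Nat.log 2, primrec_log, fun x => padicValNat_le_nat_log x⟩ ?_
  refine (((Primrec.eq.comp Primrec.fst (Primrec.const 0)).and
    (Primrec.eq.comp Primrec.snd (Primrec.const 0))).or
    ((Primrec.eq.comp Primrec.fst (Primrec.const 0)).not.and
      ((Primrec.eq.comp (Primrec.nat_mod.comp Primrec.fst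
        (primrec_two_pow.comp Primrec.snd)) (Primrec.const 0)).and
        (Primrec.eq.comp (Primrec.nat_mod.comp Primrec.fst
          (primrec_two_pow.comp (Primrec.succ.comp Primrec.snd))) (Primrec.const 0)).not))).of_eq
            fun ⟨x, n⟩ => ?_
  rcases eq_or_ne x 0 with rfl | hx
  · simp [eq_comm]
  · simp only [hx, false_and, not_false_eq_true, true_and, false_or, ← Nat.dvd_iff_mod_eq_zero,
      padicValNat_dvd_iff_le hx, Nat.succ_eq_add_one]
    omega

lemma rePred_exists (hp : PrimrecRel p) : REPred fun a => ∃ n, p a n := by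
  classical
  refine (Partrec.rfind (p := fun a n => Part.some (decide (p a n)))
    hp.decide.to_comp.partrec).dom_re.of_eq fun a => ?_
  refine Nat.rfind_dom.trans ?_
  simp

end Primrec

/-- The string `X ↾ n` of the first `n` bits of the characteristic function of `X`. A binary
string `σ` is encoded as the number with binary expansion `1σ`, so that the string encoded by a
positive number `w` has length `Nat.log 2 w`, while `0` encodes no string. -/
noncomputable def node (X : Set ℕ) : ℕ → ℕ
  | 0 => 1
  | n + 1 => 2 * node X n + open Classical in if n ∈ X then 1 else 0

/-- The string `w` is a prefix of the string `u`. -/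
def Prefix (w u : ℕ) : Prop := u >>> (Nat.log 2 u - Nat.log 2 w) = w

local infix:50 " ≼ " => Prefix

/-- The sets whose characteristic function extends the string `w`; none if `w = 0`. -/
def cylinder (w : ℕ) : Set (Set ℕ) := {X | node X (Nat.log 2 w) = w}

/-- The finite set whose characteristic function extends the string `w` by zeros. -/
def nodeSet (w : ℕ) : Set ℕ := {j | j < Nat.log 2 w ∧ w.testBit (Nat.log 2 w - (j + 1))}

section Node

variable {X Y : Set ℕ} {u v w i j k n : ℕ}

lemma log_shiftRight (u i : ℕ) : Nat.log 2 (u >>> i) = Nat.log 2 u - i := by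
  rw [Nat.shiftRight_eq_div_pow, Nat.log_div_base_pow]

lemma shiftRight_prefix (h : i ≤ Nat.log 2 u) : u >>> i ≼ u := by
  rw [Prefix, log_shiftRight, Nat.sub_sub_self h]

namespace Prefix

protected lemma refl (u : ℕ) : u ≼ u := shiftRight_prefix (i := 0) (Nat.zero_le _)

lemma log_le (h : w ≼ u) : Nat.log 2 w ≤ Nat.log 2 u := by
  rw [← h, log_shiftRight]
  exact Nat.sub_le _ _

protected lemma le (h : w ≼ u) : w ≤ u := by
  rw [← h]
  exact Nat.shiftRight_le _ _

lemma of_log_le (hv : v ≼ u) (hw : w ≼ u) (h : Nat.log 2 v ≤ Nat.log 2 w) : v ≼ w := by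
  have := hw.log_le
  calc
    w >>> (Nat.log 2 w - Nat.log 2 v)
    _ = u >>> (Nat.log 2 u - Nat.log 2 w + (Nat.log 2 w - Nat.log 2 v)) := by
      rw [Nat.shiftRight_add, hw]
    _ = u >>> (Nat.log 2 u - Nat.log 2 v) := by congr 1; omega
    _ = v := hv

protected lemma trans (hv : v ≼ w) (hw : w ≼ u) : v ≼ u := by
  have := hv.log_le
  have := hw.log_le
  calc
    u >>> (Nat.log 2 u - Nat.log 2 v)
    _ = u >>> (Nat.log 2 u - Nat.log 2 w + (Nat.log 2 w - Nat.log 2 v)) := by congr 1; omega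
    _ = v := by rw [Nat.shiftRight_add, hw, hv]

lemma total (hv : v ≼ u) (hw : w ≼ u) : v ≼ w ∨ w ≼ v :=
  (le_total _ _).imp (hv.of_log_le hw) (hw.of_log_le hv)

lemma eq_of_log_eq (h : w ≼ u) (hlog : Nat.log 2 w = Nat.log 2 u) : w = u := by
  rw [← h, hlog, Nat.sub_self, Nat.shiftRight_zero]

lemma mem_nodeSet_iff (h : w ≼ u) (hj : j < Nat.log 2 w) : j ∈ nodeSet w ↔ j ∈ nodeSet u := by
  have := h.log_le
  have hbit : w.testBit (Nat.log 2 w - (j + 1)) = u.testBit (Nat.log 2 u - (j + 1)) := by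
    conv_lhs => rw [← h, Nat.testBit_shiftRight, log_shiftRight]
    congr 1
    omega
  rw [nodeSet, nodeSet, Set.mem_ofPred_eq, Set.mem_ofPred_eq, hbit]
  exact and_congr_left fun _ => iff_of_true hj (by omega)

end Prefix

lemma Prefix.ne_zero (h : w ≼ u) (hu : u ≠ 0) : w ≠ 0 := by
  rintro rfl
  have h : u / 2 ^ Nat.log 2 u = 0 := by simpa [Prefix, Nat.shiftRight_eq_div_pow] using h
  exact (Nat.div_pos (Nat.pow_log_le_self 2 hu) (by positivity)).ne' h

lemma node_succ_shiftRight_one (X : Set ℕ) (n : ℕ) : node X (n + 1) >>> 1 = node X n := by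
  rw [node, Nat.shiftRight_one]
  split_ifs <;> omega

lemma node_add_shiftRight (X : Set ℕ) (k i : ℕ) : node X (k + i) >>> i = node X k := by
  induction i with
  | zero => rfl
  | succ i ih => rw [add_comm i, Nat.shiftRight_add, add_left_comm, add_comm 1,
      node_succ_shiftRight_one, ih]

lemma node_ne_zero (X : Set ℕ) (n : ℕ) : node X n ≠ 0 := by
  induction n with
  | zero => simp [node]
  | succ n ih => simp [node, ih]

lemma log_node (X : Set ℕ) (n : ℕ) : Nat.log 2 (node X n) = n := by
  induction n with
  | zero => simp [node]
  | succ n ih =>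
    have h := node_ne_zero X n
    have h2 : 2 ≤ node X (n + 1) := by rw [node]; omega
    rw [Nat.log_of_one_lt_of_le one_lt_two h2, ← Nat.shiftRight_one, node_succ_shiftRight_one, ih]

lemma node_prefix_node (X : Set ℕ) (h : k ≤ n) : node X k ≼ node X n := by
  obtain ⟨i, rfl⟩ := Nat.exists_eq_add_of_le h
  rw [Prefix, log_node, log_node, Nat.add_sub_cancel_left, node_add_shiftRight]

lemma Prefix.mem_cylinder (h : w ≼ u) (hX : X ∈ cylinder u) : X ∈ cylinder w := by
  have := node_prefix_node X h.log_le
  rw [Prefix, log_node, log_node, hX] at this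
  exact this.symm.trans h

lemma mem_cylinder_node_iff : Y ∈ cylinder (node X n) ↔ node Y n = node X n := by
  rw [cylinder, Set.mem_ofPred_eq, log_node]

lemma node_mem_cylinder (X : Set ℕ) (n : ℕ) : X ∈ cylinder (node X n) :=
  mem_cylinder_node_iff.2 rfl

lemma prefix_node_iff : w ≼ node X n ↔ X ∈ cylinder w ∧ Nat.log 2 w ≤ n := by
  refine ⟨fun h => ⟨h.mem_cylinder (node_mem_cylinder X n), log_node X n ▸ h.log_le⟩, ?_⟩
  rintro ⟨hX, h⟩
  exact hX ▸ node_prefix_node X h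

lemma mem_nodeSet_node : j ∈ nodeSet (node X n) ↔ j < n ∧ j ∈ X := by
  have hlast : j ∈ nodeSet (node X (j + 1)) ↔ j ∈ X := by
    simp only [nodeSet, Set.mem_ofPred_eq, log_node]
    by_cases h : j ∈ X <;> simp [node, h]
  by_cases hj : j < n
  · rw [← (node_prefix_node X hj).mem_nodeSet_iff (by rw [log_node]; omega), hlast]
    exact (and_iff_right hj).symm
  · simp [nodeSet, log_node, hj]

lemma exists_node_eq {g : ℕ → ℕ} (h0 : g 0 = 1) (hg : ∀ k, g (k + 1) >>> 1 = g k) :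
    ∃ X, node X = g := by
  refine ⟨{k | g (k + 1) % 2 = 1}, funext fun k => ?_⟩
  induction k with
  | zero => simp [node, h0]
  | succ k ih =>
    have := hg k
    rw [Nat.shiftRight_one] at this
    simp only [node, ih, Set.mem_ofPred_eq]
    split_ifs <;> omega

lemma primrec_prefix : PrimrecRel (· ≼ ·) :=
  Primrec.eq.comp (primrec_shiftRight.comp Primrec.snd (Primrec.nat_sub.comp
    (primrec_log.comp Primrec.snd) (primrec_log.comp Primrec.fst))) Primrec.fst

lemma primrec_mem_nodeSet : PrimrecRel fun j w => j ∈ nodeSet w := by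
  have hlen : Primrec fun x : ℕ × ℕ => Nat.log 2 x.2 := primrec_log.comp Primrec.snd
  refine ((Primrec.nat_lt.comp Primrec.fst hlen).and (Primrec.eq.comp (Primrec.nat_mod.comp
    (primrec_shiftRight.comp Primrec.snd (Primrec.nat_sub.comp hlen
      (Primrec.succ.comp Primrec.fst))) (Primrec.const 2)) (Primrec.const 1))).of_eq fun x => ?_
  simp [nodeSet, Nat.testBit_eq_decide_div_mod_eq, Nat.shiftRight_eq_div_pow]

end Node

/-- A tree of binary strings: a set of strings closed under prefixes. -/
structure IsTree (T : Set ℕ) : Prop where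
  zero_notMem : 0 ∉ T
  mem_of_prefix : ∀ {w u}, w ≼ u → u ∈ T → w ∈ T

/-- The lexicographically least string of length `n` in `T`, or `0` if there is none. -/
noncomputable def leftmost (T : Set ℕ) (n : ℕ) : ℕ := sInf {u | u ∈ T ∧ Nat.log 2 u = n}

section Tree

variable {T : Set ℕ} {k n u : ℕ}

lemma leftmost_spec (h : ∃ u ∈ T, Nat.log 2 u = n) :
    leftmost T n ∈ T ∧ Nat.log 2 (leftmost T n) = n :=
  Nat.sInf_mem h

lemma leftmost_eq_zero (h : ∀ u ∈ T, Nat.log 2 u ≠ n) : leftmost T n = 0 :=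
  Nat.sInf_eq_zero.2 (Or.inr (Set.eq_empty_of_forall_notMem fun u hu => h u hu.1 hu.2))

lemma leftmost_le (hu : u ∈ T) (hn : Nat.log 2 u = n) : leftmost T n ≤ u :=
  Nat.sInf_le ⟨hu, hn⟩

lemma IsTree.exists_log_eq (hT : IsTree T) (hu : u ∈ T) (h : n ≤ Nat.log 2 u) :
    ∃ w ∈ T, Nat.log 2 w = n :=
  ⟨u >>> (Nat.log 2 u - n), hT.mem_of_prefix (shiftRight_prefix (Nat.sub_le _ _)) hu, by
    rw [log_shiftRight, Nat.sub_sub_self h]⟩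

/-- The prefixes of length `k` of the leftmost strings increase lexicographically, so they
stabilise. -/
lemma exists_eventually_prefix_leftmost (hT : IsTree T) (hne : ∀ n, ∃ u ∈ T, Nat.log 2 u = n)
    (k : ℕ) : ∃ v, Nat.log 2 v = k ∧ ∀ᶠ n in atTop, v ≼ leftmost T n := by
  have hmem n := (leftmost_spec (hne n)).1
  have hlevel n := (leftmost_spec (hne n)).2
  let a n := leftmost T (n + k) >>> n
  have hlog n : Nat.log 2 (a n) = k := by
    rw [log_shiftRight, hlevel, Nat.add_sub_cancel_left]
  have hmono : Monotone a := monotone_nat_of_le_succ fun n => calc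
    a n ≤ (leftmost T (n + 1 + k) >>> 1) >>> n := by
      have hparent : leftmost T (n + 1 + k) >>> 1 ∈ T :=
        hT.mem_of_prefix (shiftRight_prefix (by rw [hlevel]; omega)) (hmem _)
      simp only [a, Nat.shiftRight_eq_div_pow _ n]
      exact Nat.div_le_div_right (leftmost_le hparent (by rw [log_shiftRight, hlevel]; omega))
    _ = a (n + 1) := by rw [← Nat.shiftRight_add, add_comm 1]
  have hbdd : BddAbove (Set.range a) := ⟨2 ^ (k + 1), by
    rintro _ ⟨n, rfl⟩
    exact (hlog n ▸ Nat.lt_pow_succ_log_self one_lt_two (a n)).le⟩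
  have hconst := tendsto_atTop_ciSup hmono hbdd
  rw [nhds_discrete, tendsto_pure] at hconst
  have hprefix : ∀ᶠ n in map (· + k) atTop, (⨆ n, a n) ≼ leftmost T n :=
    hconst.mono fun n hn => hn ▸ shiftRight_prefix (hlevel (n + k) ▸ Nat.le_add_right n k)
  obtain ⟨n, hn⟩ := hconst.exists
  exact ⟨_, hn ▸ hlog n, by rwa [map_add_atTop_eq_nat] at hprefix⟩

lemma exists_node_eventually_prefix_leftmost (hT : IsTree T)
    (hne : ∀ n, ∃ u ∈ T, Nat.log 2 u = n) :
    ∃ X, (∀ n, node X n ∈ T) ∧ ∀ k, ∀ᶠ n in atTop, node X k ≼ leftmost T n := by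
  choose g hlog hg using exists_eventually_prefix_leftmost hT hne
  have hmem : ∀ k, g k ∈ T := fun k =>
    have ⟨_, hn⟩ := (hg k).exists
    hT.mem_of_prefix hn (leftmost_spec (hne _)).1
  have hsucc : ∀ k, g (k + 1) >>> 1 = g k := fun k => by
    obtain ⟨_, hk, hk'⟩ := ((hg k).and (hg (k + 1))).exists
    have := hk.of_log_le hk' (by rw [hlog, hlog]; omega)
    rwa [Prefix, hlog, hlog, Nat.add_sub_cancel_left] at this
  have hzero : g 0 = 1 := by
    have h := hlog 0
    have h0 : g 0 ≠ 0 := fun h => hT.zero_notMem (h ▸ hmem 0)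
    rw [Nat.log_eq_zero_iff] at h
    omega
  obtain ⟨X, rfl⟩ := exists_node_eq hzero hsucc
  exact ⟨X, hmem, hg⟩

end Tree

/-- The closed class of the sets avoiding every cylinder `w` that `K` removes at some stage `s`.
For decidable `K` these are the `Π⁰₁` classes. -/
def avoiding (K : ℕ → ℕ → Prop) : Set (Set ℕ) := {X | ∀ w s, K w s → X ∉ cylinder w}

/-- A tree with path space `avoiding K`: the strings `u` none of whose prefixes is removed by `K`
before stage `Nat.log 2 u`. -/
def avoidTree (K : ℕ → ℕ → Prop) : Set ℕ :=
  {u | u ≠ 0 ∧ ∀ w s, s < Nat.log 2 u → K w s → ¬w ≼ u}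

/-- The removals `K`, together with those of all strings incomparable with `v`. -/
def restrict (K : ℕ → ℕ → Prop) (v w s : ℕ) : Prop := K w s ∨ ¬(w ≼ v ∨ v ≼ w)

/-- `P` is a basis for `Π⁰₁` classes: it meets every nonempty `Π⁰₁` class. -/
def IsBasis (P : Set (Set ℕ)) : Prop :=
  ∀ K, PrimrecRel K → (avoiding K).Nonempty → (avoiding K ∩ P).Nonempty

section Avoiding

variable {α : Type*} [Primcodable α] {K : ℕ → ℕ → Prop} {X : Set ℕ} {j v w : ℕ}

lemma mem_iff_mem_nodeSet (hX : X ∈ cylinder w) (hj : j < Nat.log 2 w) :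
    j ∈ X ↔ j ∈ nodeSet w := by
  have h := mem_nodeSet_node (X := X) (j := j) (n := Nat.log 2 w)
  rwa [hX, and_iff_right hj, Iff.comm] at h

lemma prefix_or_prefix_of_mem_cylinder (hv : X ∈ cylinder v) (hw : X ∈ cylinder w) :
    w ≼ v ∨ v ≼ w :=
  Prefix.total (prefix_node_iff.2 ⟨hw, le_max_left _ _⟩) (prefix_node_iff.2 ⟨hv, le_max_right _ _⟩)

lemma isTree_avoidTree (K : ℕ → ℕ → Prop) : IsTree (avoidTree K) where
  zero_notMem h := h.1 rfl
  mem_of_prefix hw hu := ⟨hw.ne_zero hu.1, fun _ s hs hK hv =>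
    hu.2 _ s (hs.trans_le hw.log_le) hK (hv.trans hw)⟩

lemma mem_avoiding_iff : X ∈ avoiding K ↔ ∀ n, node X n ∈ avoidTree K := by
  refine ⟨fun hX n => ⟨node_ne_zero X n, fun w s _ hK hw => hX w s hK (prefix_node_iff.1 hw).1⟩,
    fun h w s hK hX => ?_⟩
  refine (h (max (Nat.log 2 w) (s + 1))).2 w s ?_ hK (prefix_node_iff.2 ⟨hX, le_max_left _ _⟩)
  rw [log_node]
  exact Nat.lt_of_succ_le (le_max_right _ _)

lemma avoiding_nonempty_iff :
    (avoiding K).Nonempty ↔ ∀ n, ∃ u ∈ avoidTree K, Nat.log 2 u = n := by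
  refine ⟨fun ⟨X, hX⟩ n => ⟨node X n, mem_avoiding_iff.1 hX n, log_node X n⟩, fun h => ?_⟩
  obtain ⟨X, hX, -⟩ := exists_node_eventually_prefix_leftmost (isTree_avoidTree K) h
  exact ⟨X, mem_avoiding_iff.2 hX⟩

lemma avoiding_eq_empty_iff :
    avoiding K = ∅ ↔ ∃ n, ∀ u ∈ avoidTree K, Nat.log 2 u ≠ n := by
  rw [← Set.not_nonempty_iff_eq_empty, avoiding_nonempty_iff]
  push Not
  rfl

lemma avoiding_or (K L : ℕ → ℕ → Prop) :
    avoiding (fun w s => K w s ∨ L w s) = avoiding K ∩ avoiding L := by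
  ext X
  simp only [avoiding, Set.mem_ofPred_eq, Set.mem_inter_iff, or_imp, forall_and]

lemma avoiding_incomparable (v : ℕ) : avoiding (fun w _ => ¬(w ≼ v ∨ v ≼ w)) = cylinder v := by
  ext X
  refine ⟨fun hX => ?_, fun hv w _ h hw => h (prefix_or_prefix_of_mem_cylinder hv hw)⟩
  have h := not_imp_not.1 (hX (node X (Nat.log 2 v)) 0) (node_mem_cylinder X _)
  exact h.elim (·.eq_of_log_eq (log_node X _)) fun h => (h.eq_of_log_eq (log_node X _).symm).symm

lemma avoiding_restrict (K : ℕ → ℕ → Prop) (v : ℕ) :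
    avoiding (restrict K v) = avoiding K ∩ cylinder v := by
  rw [← avoiding_incomparable, ← avoiding_or]
  rfl

lemma avoiding_mem_nodeSet (j : ℕ) : avoiding (fun w _ => j ∈ nodeSet w) = {X | j ∉ X} := by
  ext X
  refine ⟨fun hX hj => hX (node X (j + 1)) 0 (mem_nodeSet_node.2 ⟨by omega, hj⟩)
    (node_mem_cylinder X _), fun hX w _ hw h => hX ((mem_iff_mem_nodeSet h hw.1).2 hw)⟩

lemma avoiding_notMem_nodeSet (j : ℕ) :
    avoiding (fun w _ => j < Nat.log 2 w ∧ j ∉ nodeSet w) = {X | j ∈ X} := by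
  ext X
  refine ⟨fun hX => ?_, fun hX w _ hw h => hw.2 ((mem_iff_mem_nodeSet h hw.1).1 hX)⟩
  by_contra hj
  exact hX (node X (j + 1)) 0 ⟨by rw [log_node]; omega, fun h => hj (mem_nodeSet_node.1 h).2⟩
    (node_mem_cylinder X _)

lemma primrec_mem_avoidTree {K : α → ℕ → ℕ → Prop}
    (hK : PrimrecPred fun x : α × ℕ × ℕ => K x.1 x.2.1 x.2.2) :
    PrimrecRel fun a u => u ∈ avoidTree (K a) := by
  have hbad : PrimrecPred fun x : ((α × ℕ) × ℕ) × ℕ =>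
      ¬(K x.1.1.1 x.1.2 x.2 ∧ x.1.2 ≼ x.1.1.2) :=
    ((hK.comp (Primrec.pair (Primrec.fst.comp (Primrec.fst.comp Primrec.fst))
      (Primrec.pair (Primrec.snd.comp Primrec.fst) Primrec.snd))).and
      (primrec_prefix.comp (Primrec.snd.comp Primrec.fst)
        (Primrec.snd.comp (Primrec.fst.comp Primrec.fst)))).not
  have hstage := primrecPred_forall_lt
    (primrec_log.comp (Primrec.snd.comp Primrec.fst)) hbad.primrecRel
  have hall := primrecPred_forall_lt (Primrec.succ.comp Primrec.snd) hstage.primrecRel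
  refine ((Primrec.eq.comp Primrec.snd (Primrec.const 0)).not.and hall).of_eq fun x => ?_
  refine and_congr_right fun _ => ⟨fun h w s hs hw hu => ?_, fun h w _ s hs hw => ?_⟩
  · exact h w (Nat.lt_succ_of_le hu.le) s hs ⟨hw, hu⟩
  · exact h w s hs hw.1 hw.2

lemma rePred_avoiding_eq_empty {K : α → ℕ → ℕ → Prop}
    (hK : PrimrecPred fun x : α × ℕ × ℕ => K x.1 x.2.1 x.2.2) :
    REPred fun a => avoiding (K a) = ∅ := by
  have hlevel : PrimrecPred fun x : (α × ℕ) × ℕ =>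
      ¬(x.2 ∈ avoidTree (K x.1.1) ∧ Nat.log 2 x.2 = x.1.2) :=
    ((primrec_mem_avoidTree hK).comp (Primrec.fst.comp Primrec.fst) Primrec.snd).and
      (Primrec.eq.comp (primrec_log.comp Primrec.snd) (Primrec.snd.comp Primrec.fst)) |>.not
  refine (rePred_exists (primrecPred_forall_lt (primrec_two_pow.comp
    (Primrec.succ.comp Primrec.snd)) hlevel.primrecRel).primrecRel).of_eq fun a => ?_
  refine (exists_congr fun n => ?_).trans avoiding_eq_empty_iff.symm
  refine ⟨fun h u hu hn => h u ?_ ⟨hu, hn⟩, fun h u _ hu => h u hu.1 hu.2⟩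
  exact hn ▸ Nat.lt_pow_succ_log_self one_lt_two u

/-- Otherwise `i ∈ D` and `i ∉ D` would both say that a `Π⁰₁` class is empty, which is an r.e.
condition. -/
lemma exists_mem_avoiding_preimage_ne (hK : PrimrecRel K) {h : ℕ → ℕ} (hh : Primrec h) {D : Set ℕ}
    (hD : ¬ComputablePred (· ∈ D)) (hne : (avoiding K).Nonempty) :
    ∃ Y ∈ avoiding K, h ⁻¹' Y ≠ D := by
  obtain ⟨X, hX⟩ := hne
  by_contra! hall
  have hmem : ∀ Y ∈ avoiding K, ∀ i, h i ∈ Y ↔ i ∈ D := fun Y hY i => by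
    rw [← hall Y hY, Set.mem_preimage]
  have hK' : PrimrecPred fun x : ℕ × ℕ × ℕ => K x.2.1 x.2.2 :=
    hK.comp (Primrec.fst.comp Primrec.snd) (Primrec.snd.comp Primrec.snd)
  have hnode : PrimrecPred fun x : ℕ × ℕ × ℕ => h x.1 ∈ nodeSet x.2.1 :=
    primrec_mem_nodeSet.comp (hh.comp Primrec.fst) (Primrec.fst.comp Primrec.snd)
  have hlen : PrimrecPred fun x : ℕ × ℕ × ℕ => h x.1 < Nat.log 2 x.2.1 :=
    Primrec.nat_lt.comp (hh.comp Primrec.fst) (primrec_log.comp (Primrec.fst.comp Primrec.snd))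
  have hin := rePred_avoiding_eq_empty (K := fun i w s => K w s ∨ h i ∈ nodeSet w) (hK'.or hnode)
  have hout := rePred_avoiding_eq_empty
    (K := fun i w s => K w s ∨ h i < Nat.log 2 w ∧ h i ∉ nodeSet w) (hK'.or (hlen.and hnode.not))
  simp only [avoiding_or, avoiding_mem_nodeSet, avoiding_notMem_nodeSet,
    Set.eq_empty_iff_forall_notMem] at hin hout
  refine hD (ComputablePred.computable_iff_re_compl_re'.2
    ⟨hin.of_eq fun i => ⟨fun hi => ?_, fun hi Y hY => hY.2 ((hmem Y hY.1 i).2 hi)⟩,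
      hout.of_eq fun i => ⟨fun hi hiD => hi X ⟨hX, (hmem X hX i).2 hiD⟩,
        fun hi Y hY => hi ((hmem Y hY.1 i).1 hY.2)⟩⟩)
  by_contra hiD
  exact hi X ⟨hX, fun hiX => hiD ((hmem X hX i).1 hiX)⟩

lemma isBasis_preimage_ne_inter {h₁ h₂ : ℕ → ℕ} (hh₁ : Primrec h₁) (hh₂ : Primrec h₂)
    {A B : Set ℕ} (hA : ¬ComputablePred (· ∈ A)) (hB : ¬ComputablePred (· ∈ B)) :
    IsBasis ({X | h₁ ⁻¹' X ≠ A} ∩ {X | h₂ ⁻¹' X ≠ B}) := by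
  intro K hK hne
  obtain ⟨X, hX, hXB⟩ := exists_mem_avoiding_preimage_ne hK hh₂ hB hne
  obtain ⟨i, hi⟩ : ∃ i, ¬(h₂ i ∈ X ↔ i ∈ B) := by
    by_contra! h
    exact hXB (Set.ext h)
  set v := node X (h₂ i + 1)
  have hrestrict : PrimrecRel (restrict K v) := hK.or
    ((primrec_prefix.comp Primrec.fst (Primrec.const v)).or
      (primrec_prefix.comp (Primrec.const v) Primrec.fst)).not
  obtain ⟨Y, hY, hYA⟩ := exists_mem_avoiding_preimage_ne hrestrict hh₁ hA
    ⟨X, by rw [avoiding_restrict]; exact ⟨hX, node_mem_cylinder X _⟩⟩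
  rw [avoiding_restrict] at hY
  have hXY : h₂ i ∈ Y ↔ h₂ i ∈ X := by
    rw [mem_iff_mem_nodeSet hY.2 (by rw [log_node]; omega), mem_nodeSet_node,
      and_iff_right (Nat.lt_succ_self _)]
  exact ⟨Y, hY.1, hYA, fun h => hi (hXY.symm.trans (h ▸ Iff.rfl))⟩

end Avoiding

/-- The string `w` forces `h ⁻¹' X ≠ D` for all its extensions `X`, by a disagreement at some
`i < Nat.log 2 w`; the bound on `i` makes this a bounded search. -/
def Conflicts (h : ℕ → ℕ) (D : Set ℕ) (w : ℕ) : Prop :=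
  ∃ i < Nat.log 2 w, h i < Nat.log 2 w ∧ ¬(h i ∈ nodeSet w ↔ i ∈ D)

/-- Limit computability in the form of Shoenfield's limit lemma: the set is the limit of a
primitive recursive sequence of approximations. -/
def IsLimitComputable (X : Set ℕ) : Prop :=
  ∃ a : ℕ → ℕ → Prop, PrimrecRel a ∧ ∀ i, ∀ᶠ s in atTop, (a i s ↔ i ∈ X)

/-- A test for membership in `P` in the limit: `ok v n` is the guess at stage `n` whether all
extensions of the string `v` belong to `P`. A positive answer need only be right about the limit
computable extensions of `v`. -/
structure IsLimitTest (ok : ℕ → ℕ → Prop) (P : Set (Set ℕ)) : Prop where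
  primrecRel : PrimrecRel ok
  eventually_or : ∀ v, (∀ᶠ n in atTop, ok v n) ∨ ∀ᶠ n in atTop, ¬ok v n
  mem_of_eventually : ∀ {v X}, (∀ᶠ n in atTop, ok v n) → X ∈ cylinder v → IsLimitComputable X →
    X ∈ P
  eventually_node : ∀ {X}, X ∈ P → ∀ᶠ k in atTop, ∀ᶠ n in atTop, ok (node X k) n

section LimitTest

variable {h : ℕ → ℕ} {D X : Set ℕ} {u w : ℕ} {P Q : Set (Set ℕ)} {ok ok' : ℕ → ℕ → Prop}

lemma Conflicts.mono (hw : Conflicts h D w) (hu : w ≼ u) : Conflicts h D u := by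
  obtain ⟨i, hi, hhi, hne⟩ := hw
  exact ⟨i, hi.trans_le hu.log_le, hhi.trans_le hu.log_le, by rwa [← hu.mem_nodeSet_iff hhi]⟩

lemma Conflicts.preimage_ne (hw : Conflicts h D w) (hX : X ∈ cylinder w) : h ⁻¹' X ≠ D := by
  rintro rfl
  obtain ⟨i, -, hhi, hne⟩ := hw
  exact hne (mem_iff_mem_nodeSet hX hhi).symm

lemma eventually_conflicts_node (hX : h ⁻¹' X ≠ D) :
    ∀ᶠ k in atTop, Conflicts h D (node X k) := by
  obtain ⟨i, hi⟩ : ∃ i, ¬(h i ∈ X ↔ i ∈ D) := by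
    by_contra! hall
    exact hX (Set.ext hall)
  filter_upwards [eventually_gt_atTop i, eventually_gt_atTop (h i)] with k hk hhk
  refine ⟨i, by rwa [log_node], by rwa [log_node], ?_⟩
  rwa [mem_nodeSet_node, and_iff_right hhk]

lemma primrecPred_conflicts {α : Type*} [Primcodable α] {D : α → Set ℕ} {f : α → ℕ}
    (hh : Primrec h) (hD : PrimrecRel fun i a => i ∈ D a) (hf : Primrec f) :
    PrimrecPred fun a => Conflicts h (D a) (f a) := by
  have hlen : Primrec fun x : α × ℕ => Nat.log 2 (f x.1) :=
    primrec_log.comp (hf.comp Primrec.fst)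
  have hbit : PrimrecPred fun x : α × ℕ => h x.2 ∈ nodeSet (f x.1) :=
    primrec_mem_nodeSet.comp (hh.comp Primrec.snd) (hf.comp Primrec.fst)
  have hmem : PrimrecPred fun x : α × ℕ => x.2 ∈ D x.1 := hD.comp Primrec.snd Primrec.fst
  refine primrecPred_exists_lt (primrec_log.comp hf) (PrimrecPred.primrecRel
    (p := fun x : α × ℕ => h x.2 < _ ∧ ¬(h x.2 ∈ nodeSet (f x.1) ↔ x.2 ∈ D x.1))
    ((Primrec.nat_lt.comp (hh.comp Primrec.snd) hlen).and ?_))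
  exact ((hbit.and hmem.not).or (hbit.not.and hmem)).of_eq fun x => by tauto

lemma IsLimitComputable.preimage (hX : IsLimitComputable X) (hh : Primrec h) :
    IsLimitComputable (h ⁻¹' X) := by
  obtain ⟨a, ha, hlim⟩ := hX
  exact ⟨fun i s => a (h i) s, ha.comp (hh.comp Primrec.fst) Primrec.snd, fun i => hlim (h i)⟩

lemma IsLimitTest.inter (hP : IsLimitTest ok P) (hQ : IsLimitTest ok' Q) :
    IsLimitTest (fun v n => ok v n ∧ ok' v n) (P ∩ Q) where
  primrecRel := hP.primrecRel.and hQ.primrecRel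
  eventually_or v := by
    rcases hP.eventually_or v with h | h
    · rcases hQ.eventually_or v with h' | h'
      · exact Or.inl (h.and h')
      · exact Or.inr (h'.mono fun _ h h' => h h'.2)
    · exact Or.inr (h.mono fun _ h h' => h h'.1)
  mem_of_eventually hv hX hlim :=
    ⟨hP.mem_of_eventually (hv.mono fun _ => And.left) hX hlim,
      hQ.mem_of_eventually (hv.mono fun _ => And.right) hX hlim⟩
  eventually_node hX := by
    filter_upwards [hP.eventually_node hX.1, hQ.eventually_node hX.2] with k h h'
    exact h.and h'

lemma isLimitTest_conflicts {a : ℕ → ℕ → Prop} (hh : Primrec h) (ha : PrimrecRel a)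
    (hlim : ∀ i, ∀ᶠ s in atTop, (a i s ↔ i ∈ D)) :
    IsLimitTest (fun v n => Conflicts h {i | a i n} v) {X | h ⁻¹' X ≠ D} := by
  have hconv : ∀ v, ∀ᶠ n in atTop, (Conflicts h {i | a i n} v ↔ Conflicts h D v) := fun v => by
    have hall : ∀ᶠ n in atTop, ∀ i ∈ Set.Iio (Nat.log 2 v), (a i n ↔ i ∈ D) :=
      (eventually_all_finite (Set.finite_Iio _)).2 fun i _ => hlim i
    filter_upwards [hall] with n hn
    refine exists_congr fun i => and_congr_right fun hi => ?_
    rw [Set.mem_ofPred_eq, hn i hi]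
  refine ⟨?_, fun v => ?_, fun {v X} hv hX _ => ?_, fun hX => ?_⟩
  · exact primrecPred_conflicts (D := fun x : ℕ × ℕ => {i | a i x.2}) hh
      (ha.comp Primrec.fst (Primrec.snd.comp Primrec.snd)) Primrec.fst
  · by_cases hv : Conflicts h D v
    · exact Or.inl ((hconv v).mono fun n hn => hn.2 hv)
    · exact Or.inr ((hconv v).mono fun n hn => mt hn.1 hv)
  · obtain ⟨n, hn, hv⟩ := ((hconv v).and hv).exists
    exact (hn.1 hv).preimage_ne hX
  · exact (eventually_conflicts_node hX).mono fun k hk => (hconv _).mono fun n hn => hn.2 hk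

/-- If `D` is not limit computable, then the trivial test is correct. -/
lemma exists_isLimitTest_preimage_ne (hh : Primrec h) (D : Set ℕ) :
    ∃ ok, IsLimitTest ok {X | h ⁻¹' X ≠ D} := by
  by_cases hD : IsLimitComputable D
  · obtain ⟨a, ha, hlim⟩ := hD
    exact ⟨_, isLimitTest_conflicts hh ha hlim⟩
  · have htrue : PrimrecRel fun _ _ : ℕ => True :=
      (Primrec.eq.comp (Primrec.const 0) (Primrec.const 0)).of_eq fun _ => by simp
    exact ⟨_, htrue, by simp, fun _ _ hX h => hD (h ▸ hX.preimage hh), by simp⟩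

end LimitTest

/-- The data of one diagonalisation strategy. At every stage `n` with `gate n` it tests a string
comparable with `root`, and this string is removed at stage `s` if `halts n s`. -/
structure Strategy where
  root : ℕ
  gate : ℕ → Prop
  halts : ℕ → ℕ → Prop

namespace Strategy

/-- The removals caused by testing the string `ℓ n` at every stage `n`; the pair of the stages of
the test and of the removal is coded by a single number. -/
def removed (S : Strategy) (ℓ : ℕ → ℕ) (w q : ℕ) : Prop :=
  ℓ q.unpair.1 = w ∧ S.halts q.unpair.1 q.unpair.2

/-- The tree of the strings comparable with the root and extending no removed string, if `ℓ n` is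
tested at stage `n`. Its strings of length `n` depend on the stages before `n` only. -/
def tree (S : Strategy) (ℓ : ℕ → ℕ) : Set ℕ := avoidTree (restrict (S.removed ℓ) S.root)

/-- The string tested after testing the strings in `L`: the shortest untested prefix of the
leftmost string of length `L.length`, or `0` if there is none or the gate is closed. -/
noncomputable def nextLabel (S : Strategy) (L : List ℕ) : ℕ :=
  sInf {w | S.gate L.length ∧ w ∉ L ∧ w ≼ leftmost (S.tree (L.getD · 0)) L.length}

/-- The string tested at stage `n`, or `0` if none is. -/
noncomputable def label (S : Strategy) (n : ℕ) : ℕ :=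
  S.nextLabel ((List.range n).attach.map fun m => S.label m.1)
decreasing_by exact List.mem_range.1 m.2

/-- Uniformly primitive recursive families of strategies. -/
structure IsPrimrec (κ : ℕ → Strategy) : Prop where
  root : Primrec fun c => (κ c).root
  gate : PrimrecRel fun c n => (κ c).gate n
  halts : PrimrecPred fun x : ℕ × ℕ × ℕ => (κ x.1).halts x.2.1 x.2.2

variable {S : Strategy} {m n u w : ℕ}

lemma label_eq_nextLabel (S : Strategy) (n : ℕ) :
    S.label n = S.nextLabel ((List.range n).map S.label) := by
  rw [label]
  simp

lemma mem_tree_congr {ℓ ℓ' : ℕ → ℕ} (h : ∀ m < Nat.log 2 u, ℓ m = ℓ' m) :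
    u ∈ S.tree ℓ ↔ u ∈ S.tree ℓ' := by
  refine and_congr_right fun _ => forall₂_congr fun w q => forall_congr' fun hq => ?_
  rw [restrict, restrict, removed, removed, h _ (q.unpair_left_le.trans_lt hq)]

lemma label_eq (S : Strategy) (n : ℕ) : S.label n = sInf {w | S.gate n ∧
    (∀ m < n, S.label m ≠ w) ∧ w ≼ leftmost (S.tree S.label) n} := by
  have hleft : leftmost (S.tree (((List.range n).map S.label).getD · 0)) n =
      leftmost (S.tree S.label) n := by
    refine congrArg sInf (Set.ext fun u => and_congr_left fun hu => mem_tree_congr fun m hm => ?_)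
    simp [List.getD_eq_getElem?_getD, hu ▸ hm]
  rw [label_eq_nextLabel, nextLabel, List.length_map, List.length_range, hleft]
  simp

lemma label_spec (h : S.label n ≠ 0) : S.gate n ∧ (∀ m < n, S.label m ≠ S.label n) ∧
    S.label n ≼ leftmost (S.tree S.label) n := by
  have hne := Nat.nonempty_of_pos_sInf (Nat.pos_of_ne_zero (S.label_eq n ▸ h))
  have hmem := Nat.sInf_mem hne
  rwa [← S.label_eq n] at hmem

lemma log_label_le (S : Strategy) (n : ℕ) : Nat.log 2 (S.label n) ≤ n := by
  by_cases h : S.label n = 0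
  · simp [h]
  have hpref := (label_spec h).2.2
  refine hpref.log_le.trans ?_
  by_contra! hlog
  have hlevel : ∀ u ∈ S.tree S.label, Nat.log 2 u ≠ n := fun u hu hn =>
    hlog.ne' (leftmost_spec ⟨u, hu, hn⟩).2
  rw [leftmost_eq_zero hlevel] at hlog
  simp at hlog

lemma label_eq_zero (h : ∀ u ∈ S.tree S.label, Nat.log 2 u ≠ n) : S.label n = 0 := by
  by_contra h0
  have := (label_spec h0).2.2.le
  rw [leftmost_eq_zero h] at this
  omega

lemma label_ne_zero (hgate : S.gate n) (hne : ∃ u ∈ S.tree S.label, Nat.log 2 u = n) :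
    S.label n ≠ 0 := by
  obtain ⟨hmem, hlog⟩ := leftmost_spec hne
  have hself : leftmost (S.tree S.label) n ∈ {w | S.gate n ∧ (∀ m < n, S.label m ≠ w) ∧
      w ≼ leftmost (S.tree S.label) n} :=
    ⟨hgate, fun m hm h => by have := S.log_label_le m; rw [h] at this; omega, .refl _⟩
  rw [label_eq]
  exact (Nat.sInf_mem ⟨_, hself⟩).2.2.ne_zero hmem.1

lemma label_le (hgate : S.gate n) (hw : w ≼ leftmost (S.tree S.label) n)
    (hnew : ∀ m < n, S.label m ≠ w) : S.label n ≤ w := by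
  rw [label_eq]
  exact Nat.sInf_le ⟨hgate, hnew, hw⟩

lemma eventually_label_eq_zero
    (h : avoiding (restrict (S.removed S.label) S.root) = ∅) : ∀ᶠ n in atTop, S.label n = 0 := by
  obtain ⟨n, hn⟩ := avoiding_eq_empty_iff.1 h
  filter_upwards [eventually_ge_atTop n] with m hm
  refine label_eq_zero fun u hu hum => ?_
  obtain ⟨w, hw, hwn⟩ := (isTree_avoidTree _).exists_log_eq hu (hum ▸ hm)
  exact hn w hw hwn

/-- Every string is tested at most once. -/
lemma tendsto_label (h : ∀ᶠ n in atTop, S.label n ≠ 0) : Tendsto S.label atTop atTop := by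
  obtain ⟨N, hN⟩ := eventually_atTop.1 h
  refine (tendsto_add_atTop_iff_nat N).1 (Function.Injective.nat_tendsto_atTop fun i j hij => ?_)
  by_contra hne
  rcases Nat.lt_or_gt_of_ne hne with hlt | hlt
  · exact (label_spec (hN (j + N) (by omega))).2.1 _ (by omega) hij
  · exact (label_spec (hN (i + N) (by omega))).2.1 _ (by omega) hij.symm

/-- A path `X` which the labels follow, and all of whose initial segments are tested. -/
structure Follows (S : Strategy) (X : Set ℕ) : Prop where
  mem_avoiding : X ∈ avoiding (restrict (S.removed S.label) S.root)
  eventually_prefix : ∀ k, ∀ᶠ n in atTop, node X k ≼ S.label n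
  exists_label_eq : ∀ k, ∃ n, S.label n = node X k

lemma exists_follows (hgate : ∀ᶠ n in atTop, S.gate n)
    (hne : (avoiding (restrict (S.removed S.label) S.root)).Nonempty) : ∃ X, S.Follows X := by
  have hlevel := avoiding_nonempty_iff.1 hne
  obtain ⟨X, hX, hpref⟩ := exists_node_eventually_prefix_leftmost (isTree_avoidTree _) hlevel
  have hne0 : ∀ᶠ n in atTop, S.label n ≠ 0 := hgate.mono fun n hn => label_ne_zero hn (hlevel n)
  have htop := tendsto_label hne0
  refine ⟨X, mem_avoiding_iff.2 hX, fun k => ?_, fun k => ?_⟩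
  · filter_upwards [hne0, hpref k, htop.eventually_ge_atTop (2 ^ k)] with n h0 hn hk
    refine hn.of_log_le (label_spec h0).2.2 ?_
    rw [log_node]
    exact Nat.le_log_of_pow_le one_lt_two hk
  · by_contra! hnew
    obtain ⟨n, hn, hpn, hlt⟩ :=
      (hgate.and ((hpref k).and (htop.eventually_gt_atTop (node X k)))).exists
    exact hlt.not_ge (label_le hn hpn fun m _ => hnew m)

lemma Follows.isLimitComputable {X : Set ℕ} (h : S.Follows X) (hS : Primrec S.label) :
    IsLimitComputable X := by
  refine ⟨fun i s => i ∈ nodeSet (S.label s),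
    primrec_mem_nodeSet.comp Primrec.fst (hS.comp Primrec.snd), fun i => ?_⟩
  filter_upwards [h.eventually_prefix (i + 1)] with s hs
  rw [← hs.mem_nodeSet_iff (by rw [log_node]; omega), mem_nodeSet_node,
    and_iff_right (Nat.lt_succ_self i)]

lemma exists_halts_mem_cylinder_label {Y : Set ℕ} (hgate : ∀ᶠ n in atTop, S.gate n)
    (hhalts : ∀ᶠ n in atTop, ∃ s, S.halts n s) (hY : Y ∈ cylinder S.root) :
    ∃ n s, S.halts n s ∧ Y ∈ cylinder (S.label n) := by
  by_contra! hnone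
  have hYmem : Y ∈ avoiding (restrict (S.removed S.label) S.root) := by
    rw [avoiding_restrict]
    exact ⟨fun w q hw => hw.1 ▸ hnone _ _ hw.2, hY⟩
  obtain ⟨X, hX⟩ := exists_follows hgate ⟨Y, hYmem⟩
  obtain ⟨N, hN⟩ := eventually_atTop.1 hhalts
  obtain ⟨n, hn⟩ := hX.exists_label_eq N
  have hNn : N ≤ n := by
    have := S.log_label_le n
    rwa [hn, log_node] at this
  obtain ⟨s, hs⟩ := hN n hNn
  have hXmem := hX.mem_avoiding
  rw [avoiding_restrict] at hXmem
  exact hXmem.1 (node X N) (n.pair s) (by simpa [removed, hn]) (node_mem_cylinder X N)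

lemma eventually_conflicts_label {P : Set (Set ℕ)} {ok : ℕ → ℕ → Prop} {h : ℕ → ℕ} {D : Set ℕ}
    (hS : Primrec S.label) (hok : IsLimitTest ok P) (hgate : ∀ n, S.gate n ↔ ok S.root n)
    (hP : ∀ X ∈ P, h ⁻¹' X ≠ D) :
    ∀ᶠ n in atTop, S.label n ≠ 0 → Conflicts h D (S.label n) := by
  rcases hok.eventually_or S.root with hopen | hclosed
  · rcases (avoiding (restrict (S.removed S.label) S.root)).eq_empty_or_nonempty with he | hne
    · exact (eventually_label_eq_zero he).mono fun n hn h0 => absurd hn h0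
    · obtain ⟨X, hX⟩ := exists_follows (hopen.mono fun n => (hgate n).2) hne
      have hroot := (avoiding_restrict _ _ ▸ hX.mem_avoiding).2
      have hXP := hok.mem_of_eventually hopen hroot (hX.isLimitComputable hS)
      obtain ⟨k, hk⟩ := (eventually_conflicts_node (hP X hXP)).exists
      exact (hX.eventually_prefix k).mono fun n hn _ => hk.mono hn
  · exact hclosed.mono fun n hn h0 => absurd ((hgate n).1 (label_spec h0).1) hn

lemma primrec_mem_tree {κ : ℕ → Strategy} (hκ : IsPrimrec κ) :
    PrimrecRel fun (x : ℕ × List ℕ) u => u ∈ (κ x.1).tree (x.2.getD · 0) := by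
  have hc : Primrec fun x : (ℕ × List ℕ) × ℕ × ℕ => x.1.1 := Primrec.fst.comp Primrec.fst
  have hw : Primrec fun x : (ℕ × List ℕ) × ℕ × ℕ => x.2.1 := Primrec.fst.comp Primrec.snd
  have hq : Primrec fun x : (ℕ × List ℕ) × ℕ × ℕ => x.2.2.unpair :=
    Primrec.unpair.comp (Primrec.snd.comp Primrec.snd)
  have hlabel : Primrec fun x : (ℕ × List ℕ) × ℕ × ℕ => x.1.2.getD x.2.2.unpair.1 0 :=
    (Primrec.list_getD 0).comp (Primrec.snd.comp Primrec.fst) (Primrec.fst.comp hq)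
  have hroot := hκ.root.comp hc
  exact primrec_mem_avoidTree (((Primrec.eq.comp hlabel hw).and (hκ.halts.comp (hc.pair hq))).or
    ((primrec_prefix.comp hw hroot).or (primrec_prefix.comp hroot hw)).not)

lemma primrec_nextLabel {κ : ℕ → Strategy} (hκ : IsPrimrec κ) :
    Primrec₂ fun c L => (κ c).nextLabel L := by
  have hlen : Primrec fun x : ℕ × List ℕ => x.2.length := Primrec.list_length.comp Primrec.snd
  have hleft : Primrec fun x : ℕ × List ℕ => leftmost ((κ x.1).tree (x.2.getD · 0)) x.2.length :=
    primrec_sInf (primrec_two_pow.comp (Primrec.succ.comp hlen))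
      ((primrec_mem_tree hκ).and (Primrec.eq.comp (primrec_log.comp Primrec.snd)
        (hlen.comp Primrec.fst)).primrecRel)
      fun x u hu => hu.2 ▸ Nat.lt_pow_succ_log_self one_lt_two u
  have hnew : PrimrecPred fun x : (ℕ × List ℕ) × ℕ => x.2 ∉ x.1.2 :=
    (Primrec.eq.exists_mem_list.comp (Primrec.snd.comp Primrec.fst) Primrec.snd).not.of_eq
      fun x => by simp
  exact primrec_sInf (Primrec.succ.comp hleft)
    (((hκ.gate.comp Primrec.fst hlen).comp Primrec.fst).and (hnew.and
      (primrec_prefix.comp Primrec.snd (hleft.comp Primrec.fst)))).primrecRel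
    fun x w hw => Nat.lt_succ_of_le hw.2.2.le

lemma primrec_label {κ : ℕ → Strategy} (hκ : IsPrimrec κ) : Primrec₂ fun c n => (κ c).label n :=
  Primrec.nat_strong_rec _ (g := fun c L => some ((κ c).nextLabel L))
    (Primrec.option_some.comp (primrec_nextLabel hκ))
    fun c n => congrArg some ((κ c).label_eq_nextLabel n).symm

lemma primrec_removed_label {κ : ℕ → Strategy} (hκ : IsPrimrec κ) : PrimrecPred fun x : ℕ × ℕ × ℕ =>
    (κ x.1).removed (κ x.1).label x.2.1 x.2.2 := by
  have hq : Primrec fun x : ℕ × ℕ × ℕ => x.2.2.unpair :=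
    Primrec.unpair.comp (Primrec.snd.comp Primrec.snd)
  exact (Primrec.eq.comp ((primrec_label hκ).comp Primrec.fst (Primrec.fst.comp hq))
    (Primrec.fst.comp Primrec.snd)).and (hκ.halts.comp (Primrec.fst.pair hq))

end Strategy

/-- The `n`-th block of the `c`-th column of `ℕ`. Column `c` has density `2 ^ (-(c + 1))`. By the
junk values of `padicValNat` and `Nat.log`, the number `0` is in block `0` of column `0`. -/
def block (c n : ℕ) : Set ℕ := {x | padicValNat 2 x = c ∧ Nat.log 2 x = n}

section Density

variable {S T : Set ℕ} {n : ℕ}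

lemma partialDensity_add_compl (S : Set ℕ) (hn : n ≠ 0) :
    partialDensity S n + partialDensity Sᶜ n = 1 := by
  have hcard := Set.ncard_inter_add_ncard_sdiff_eq_ncard (Set.Iio n) S (Set.finite_Iio n)
  rw [Set.inter_comm, Set.sdiff_eq, Set.inter_comm _ Sᶜ, Set.ncard_Iio_nat] at hcard
  rw [partialDensity, partialDensity, ← add_div, div_eq_one_iff_eq (Nat.cast_ne_zero.2 hn)]
  exact_mod_cast hcard

lemma density1_iff_tendsto_compl : Density1 S ↔ Tendsto (partialDensity Sᶜ) atTop (nhds 0) := by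
  have hS : partialDensity S =ᶠ[atTop] fun n => 1 - partialDensity Sᶜ n := by
    filter_upwards [eventually_ne_atTop 0] with n hn
    exact eq_sub_of_add_eq (partialDensity_add_compl S hn)
  refine (tendsto_congr' hS).trans ⟨fun h => ?_, fun h => ?_⟩
  · simpa using h.const_sub 1
  · simpa using h.const_sub 1

lemma partialDensity_le_of_forall_dvd {b d : ℕ} (hd : d ≠ 0) (h : ∀ x ∈ T, b ≤ x → d ∣ x) (n : ℕ) :
    partialDensity T n ≤ (b + 1) / n + 1 / d := by
  have hsub : T ∩ Set.Iio n ⊆ Set.Iio b ∪ (d * ·) '' Set.Iio (n / d + 1) := by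
    rintro x ⟨hxT, hxn⟩
    refine (lt_or_ge x b).imp_right fun hbx => ?_
    obtain ⟨y, rfl⟩ := h x hxT hbx
    refine ⟨y, Nat.lt_succ_of_le ?_, rfl⟩
    rw [Nat.le_div_iff_mul_le (Nat.pos_of_ne_zero hd), mul_comm]
    exact hxn.le
  have hcard : (T ∩ Set.Iio n).ncard ≤ b + (n / d + 1) := calc
    _ ≤ (Set.Iio b).ncard + ((d * ·) '' Set.Iio (n / d + 1)).ncard :=
      (Set.ncard_le_ncard hsub ((Set.finite_Iio b).union ((Set.finite_Iio _).image _))).trans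
        (Set.ncard_union_le _ _)
    _ ≤ b + (n / d + 1) := by
      simpa using Set.ncard_image_le (f := (d * ·)) (Set.finite_Iio (n / d + 1))
  rcases eq_or_ne n 0 with rfl | hn
  · simp [partialDensity]
  · calc partialDensity T n ≤ (b + (n / d + 1)) / n := by
          refine div_le_div_of_nonneg_right ?_ n.cast_nonneg
          exact (Nat.cast_le.2 hcard).trans (by push_cast; gcongr; exact Nat.cast_div_le)
      _ = (b + 1) / n + 1 / d := by field_simp; ring

lemma density1_of_forall_dvd (h : ∀ E, ∀ᶠ x in atTop, x ∉ S → 2 ^ E ∣ x) : Density1 S := by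
  rw [density1_iff_tendsto_compl]
  refine tendsto_order.2 ⟨fun a ha => Eventually.of_forall fun n =>
    ha.trans_le (div_nonneg (Nat.cast_nonneg _) n.cast_nonneg), fun ε hε => ?_⟩
  obtain ⟨E, hE⟩ := exists_pow_lt_of_lt_one hε (one_half_lt_one (α := ℝ))
  obtain ⟨b, hb⟩ := eventually_atTop.1 (h E)
  have hlim : Tendsto (fun n : ℕ => ((b : ℝ) + 1) / n + (1 / 2) ^ E) atTop
      (nhds ((1 / 2) ^ E)) := by
    simpa only [zero_add] using
      (tendsto_const_div_atTop_nhds_zero_nat ((b : ℝ) + 1)).add_const ((1 / 2) ^ E)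
  filter_upwards [hlim.eventually_lt_const hE] with n hn
  refine (partialDensity_le_of_forall_dvd (pow_ne_zero E two_ne_zero)
    (fun x hx hbx => hb x hbx hx) n).trans_lt ?_
  simpa using hn

lemma block_subset_Iio (c n : ℕ) : block c n ⊆ Set.Iio (2 ^ (n + 1)) := fun x hx =>
  hx.2 ▸ Nat.lt_pow_succ_log_self one_lt_two x

lemma two_pow_le_ncard_block (c m : ℕ) : 2 ^ m ≤ (block c (c + 1 + m)).ncard := by
  have hinj : Function.Injective fun y => 2 ^ c * (2 * (2 ^ m + y) + 1) := fun y z h => by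
    have := Nat.eq_of_mul_eq_mul_left (Nat.two_pow_pos c) h
    omega
  have hsub : (fun y => 2 ^ c * (2 * (2 ^ m + y) + 1)) '' Set.Iio (2 ^ m) ⊆
      block c (c + 1 + m) := by
    rintro _ ⟨y, hy, rfl⟩
    refine ⟨?_, ?_⟩
    · rw [padicValNat.mul (by positivity) (by positivity), padicValNat.prime_pow,
        padicValNat.eq_zero_of_not_dvd (by omega), add_zero]
    · have hlow : 2 ^ (c + 1 + m) = 2 ^ c * (2 * 2 ^ m) := by ring
      rw [Set.mem_Iio] at hy
      rw [Nat.log_eq_iff (by simp), pow_succ, hlow, mul_assoc, Nat.mul_le_mul_left_iff (by simp),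
        Nat.mul_lt_mul_left (by simp)]
      omega
  calc 2 ^ m = (Set.Iio (2 ^ m)).ncard := (Set.ncard_Iio_nat _).symm
    _ = _ := (Set.ncard_image_of_injective _ hinj).symm
    _ ≤ _ := Set.ncard_le_ncard hsub ((Set.finite_Iio _).subset (block_subset_Iio _ _))

lemma eventually_inter_block_nonempty (hS : Density1 S) (c : ℕ) :
    ∀ᶠ n in atTop, (S ∩ block c n).Nonempty := by
  have hlim : Tendsto (fun n => partialDensity Sᶜ (2 ^ (n + 1))) atTop (nhds 0) :=
    (density1_iff_tendsto_compl.1 hS).comp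
      ((tendsto_pow_atTop_atTop_of_one_lt one_lt_two).comp (tendsto_add_atTop_nat 1))
  filter_upwards [hlim.eventually_lt_const (by positivity : (0 : ℝ) < (1 / 2) ^ (c + 2)),
    eventually_ge_atTop (c + 1)] with n hn hcn
  obtain ⟨m, rfl⟩ := Nat.exists_eq_add_of_le hcn
  by_contra hempty
  have hsub : block c (c + 1 + m) ⊆ Sᶜ ∩ Set.Iio (2 ^ (c + 1 + m + 1)) := fun x hx =>
    ⟨fun hxS => hempty ⟨x, hxS, hx⟩, block_subset_Iio _ _ hx⟩
  have hcard : (2 ^ m : ℝ) ≤ (Sᶜ ∩ Set.Iio (2 ^ (c + 1 + m + 1))).ncard := by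
    exact_mod_cast (two_pow_le_ncard_block c m).trans
      (Set.ncard_le_ncard hsub ((Set.finite_Iio _).inter_of_right _))
  refine hn.not_ge ?_
  rw [partialDensity, le_div_iff₀ (by positivity)]
  refine le_of_eq_of_le ?_ hcard
  push_cast
  rw [show c + 1 + m + 1 = c + 2 + m by ring, pow_add 2 (c + 2) m, ← mul_assoc, ← mul_pow]
  norm_num

end Density

section Oracle

variable {C D : Set ℕ}

lemma recIn_of_partrec {O f : ℕ →. ℕ} (hf : Nat.Partrec f) : RecIn O f := by
  induction hf with
  | zero => exact .zero
  | succ => exact .succ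
  | left => exact .left
  | right => exact .right
  | pair _ _ h₁ h₂ => exact .pair h₁ h₂
  | comp _ _ h₁ h₂ => exact .comp h₁ h₂
  | prec _ _ h₁ h₂ => exact .prec h₁ h₂
  | rfind _ h => exact .rfind h

lemma exists_recIn_chi_dom_iff {P Q : ℕ → ℕ → Prop} (hP : PrimrecRel P) (hQ : PrimrecRel Q)
    (D : Set ℕ) : ∃ ψ, RecIn (chi D) ψ ∧ ∀ x, (ψ x).Dom ↔ ∃ i, i ∈ D ∧ P x i ∨ i ∉ D ∧ Q x i := by
  classical
  let g : ℕ → ℕ := fun r => if r.unpair.2 = 1 ∧ P r.unpair.1.unpair.1 r.unpair.1.unpair.2 ∨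
    r.unpair.2 = 0 ∧ Q r.unpair.1.unpair.1 r.unpair.1.unpair.2 then 0 else 1
  have hg : Primrec g := by
    have hq : Primrec fun r : ℕ => r.unpair.1.unpair :=
      Primrec.unpair.comp (Primrec.fst.comp Primrec.unpair)
    have hx := Primrec.fst.comp hq
    have hi := Primrec.snd.comp hq
    have hb := Primrec.snd.comp Primrec.unpair
    exact Primrec.ite (((Primrec.eq.comp hb (Primrec.const 1)).and (hP.comp hx hi)).or
      ((Primrec.eq.comp hb (Primrec.const 0)).and (hQ.comp hx hi)))
      (Primrec.const 0) (Primrec.const 1)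
  have hquery : RecIn (chi D) fun q =>
      Part.some (g (q.pair (if q.unpair.2 ∈ D then 1 else 0))) := by
    refine Eq.subst (motive := RecIn (chi D)) (funext fun q => ?_)
      ((recIn_of_partrec (Partrec.nat_iff.1 hg.to_comp.partrec)).comp
        ((recIn_of_partrec Nat.Partrec.some).pair (RecIn.oracle.comp RecIn.right)))
    change ((Part.some q.pair).bind fun k => ((Part.some q.unpair.2).bind
      fun i => Part.some (if i ∈ D then 1 else 0)).map k).bind (fun r => Part.some (g r)) = _
    simp only [Part.bind_some, Part.map_some]
  exact ⟨_, hquery.rfind, fun x => Nat.rfind_dom.trans (by simp [g])⟩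

lemma genericallyComputes_of_forall_not_dom {ψ : ℕ →. ℕ} (hψ : RecIn (chi D) ψ)
    (hdens : Density1 {x | (ψ x).Dom}) (hC : ∀ x ∈ C, ¬(ψ x).Dom) : GenericallyComputes D C := by
  have hmem : ∀ x v, v ∈ (ψ x >>= (pure 0 : ℕ →. ℕ)) ↔ v = 0 ∧ (ψ x).Dom := fun x v => by
    refine Part.mem_bind_iff.trans ⟨fun ⟨_, ha, hv⟩ => ⟨Part.mem_some_iff.1 hv, ha.1⟩,
      fun ⟨hv, ha⟩ => ⟨_, Part.get_mem ha, Part.mem_some_iff.2 hv⟩⟩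
  refine ⟨fun x => ψ x >>= (pure 0 : ℕ →. ℕ), RecIn.zero.comp hψ, ?_, fun x v hv =>
    Or.inl ((hmem x v).1 hv).1, fun x hx => absurd ((hmem x 1).1 hx).1 one_ne_zero,
    fun x hx hxC => hC x hxC ((hmem x 0).1 hx).2⟩
  convert hdens using 3 with x
  simp only [Part.dom_iff_mem, hmem, exists_eq_left]

lemma genericallyComputes_of_conflicts {t h : ℕ → ℕ} (ht : Primrec t) (hh : Primrec h)
    (hdens : Density1 {x | t x ≠ 0 → Conflicts h D (t x)})
    (hC : ∀ x ∈ C, t x ≠ 0 ∧ ¬Conflicts h D (t x)) : GenericallyComputes D C := by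
  have htx : Primrec fun x : ℕ × ℕ => t x.1 := ht.comp Primrec.fst
  have hhi : Primrec fun x : ℕ × ℕ => h x.2 := hh.comp Primrec.snd
  have hzero := Primrec.eq.comp htx (Primrec.const 0)
  have hi := Primrec.nat_lt.comp Primrec.snd (primrec_log.comp htx)
  have hlt := Primrec.nat_lt.comp hhi (primrec_log.comp htx)
  have hbit := primrec_mem_nodeSet.comp hhi htx
  obtain ⟨ψ, hψ, hdom⟩ := exists_recIn_chi_dom_iff
    (P := fun x i => t x = 0 ∨ i < Nat.log 2 (t x) ∧ h i < Nat.log 2 (t x) ∧ h i ∉ nodeSet (t x))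
    (Q := fun x i => t x = 0 ∨ i < Nat.log 2 (t x) ∧ h i < Nat.log 2 (t x) ∧ h i ∈ nodeSet (t x))
    (hzero.or (hi.and (hlt.and hbit.not))) (hzero.or (hi.and (hlt.and hbit))) D
  have hconf : ∀ x, (ψ x).Dom ↔ (t x ≠ 0 → Conflicts h D (t x)) := fun x => by
    rw [hdom]
    rcases eq_or_ne (t x) 0 with h0 | h0
    · simp [h0, Classical.em]
    · simp only [h0, ne_eq, not_false_eq_true, true_implies, false_or, Conflicts]
      exact exists_congr fun i => by tauto
  refine genericallyComputes_of_forall_not_dom hψ (by simpa only [hconf] using hdens) ?_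
  exact fun x hx hψx => (hC x hx).2 ((hconf x).1 hψx (hC x hx).1)

end Oracle

open Nat.Partrec (Code)

/-- Column `c` is devoted to the computation with this index. -/
def columnCode (c : ℕ) : Code := Denumerable.ofNat Code c.unpair.1

/-- Within `s` steps, the computation belonging to column `c` halts on some argument in block `n`
of this column. -/
def HaltsOnBlock (c n s : ℕ) : Prop :=
  ∃ x < 2 ^ (n + 1), x ∈ block c n ∧ ((columnCode c).evaln s x).isSome

/-- The strategy of column `c = ⟨e, v⟩`: it handles the computation with index `e` and the sets
extending the string `v`. -/
def columnStrategy (ok : ℕ → ℕ → Prop) (c : ℕ) : Strategy where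
  root := c.unpair.2
  gate := ok c.unpair.2
  halts := HaltsOnBlock c

/-- The label of a number is the string tested at its block by the strategy of its column. -/
noncomputable def numberLabel (ok : ℕ → ℕ → Prop) (x : ℕ) : ℕ :=
  (columnStrategy ok (padicValNat 2 x)).label (Nat.log 2 x)

/-- The numbers whose label is an initial segment of `Z` and at which the computation belonging to
their column has the value `0`. -/
def diagonalSet (ok : ℕ → ℕ → Prop) (Z : Set ℕ) : Set ℕ :=
  {x | Z ∈ cylinder (numberLabel ok x) ∧ 0 ∈ (columnCode (padicValNat 2 x)).eval x}

section Construction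

variable {ok : ℕ → ℕ → Prop} {P : Set (Set ℕ)} {c n x : ℕ} {Z : Set ℕ}

lemma exists_haltsOnBlock (hx : x ∈ block c n) (hdom : ((columnCode c).eval x).Dom) :
    ∃ s, HaltsOnBlock c n s := by
  obtain ⟨y, hy⟩ := Part.dom_iff_mem.1 hdom
  obtain ⟨s, hs⟩ := Code.evaln_complete.1 hy
  exact ⟨s, x, block_subset_Iio c n hx, hx, Option.isSome_iff_exists.2 ⟨y, hs⟩⟩

lemma isPrimrec_columnStrategy (hok : PrimrecRel ok) : Strategy.IsPrimrec (columnStrategy ok) where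
  root := Primrec.snd.comp Primrec.unpair
  gate := hok.comp (Primrec.snd.comp (Primrec.unpair.comp Primrec.fst)) Primrec.snd
  halts := by
    have hc : Primrec fun y : (ℕ × ℕ × ℕ) × ℕ => y.1.1 := Primrec.fst.comp Primrec.fst
    have hn : Primrec fun y : (ℕ × ℕ × ℕ) × ℕ => y.1.2.1 :=
      Primrec.fst.comp (Primrec.snd.comp Primrec.fst)
    have hs : Primrec fun y : (ℕ × ℕ × ℕ) × ℕ => y.1.2.2 :=
      Primrec.snd.comp (Primrec.snd.comp Primrec.fst)
    have hcode : Primrec columnCode :=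
      (Primrec.ofNat Code).comp (Primrec.fst.comp Primrec.unpair)
    have hevaln : Primrec fun y : (ℕ × ℕ × ℕ) × ℕ => (columnCode y.1.1).evaln y.1.2.2 y.2 :=
      Code.primrec_evaln.comp ((hs.pair (hcode.comp hc)).pair Primrec.snd)
    exact primrecPred_exists_lt
      (primrec_two_pow.comp (Primrec.succ.comp (Primrec.fst.comp Primrec.snd)))
      (((Primrec.eq.comp (primrec_padicValNat.comp Primrec.snd) hc).and
        (Primrec.eq.comp (primrec_log.comp Primrec.snd) hn)).and
        (Primrec.eq.comp (Primrec.option_isSome.comp hevaln) (Primrec.const true))).primrecRel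

lemma primrec_numberLabel (hok : PrimrecRel ok) : Primrec (numberLabel ok) :=
  (Strategy.primrec_label (isPrimrec_columnStrategy hok)).comp primrec_padicValNat primrec_log

/-- Otherwise `Z` would belong to the `Π⁰₁` class of the sets none of whose initial segments is ever
removed. This class would then have a member in `P`, but the columns of the initial segments of the
latter, where the gate is eventually open, remove one of them. -/
lemma exists_haltsOnBlock_mem_cylinder_label (hok : IsLimitTest ok P) (hP : IsBasis P) {e : ℕ}
    (hhalts : ∀ v, ∀ᶠ n in atTop, ∃ s, HaltsOnBlock (e.pair v) n s) (Z : Set ℕ) :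
    ∃ v n s, HaltsOnBlock (e.pair v) n s ∧
      Z ∈ cylinder ((columnStrategy ok (e.pair v)).label n) := by
  by_contra! hZ
  let K : ℕ → ℕ → Prop := fun w q => (columnStrategy ok (e.pair q.unpair.1)).removed
    (columnStrategy ok (e.pair q.unpair.1)).label w q.unpair.2
  have hK : PrimrecRel K := by
    have hq : Primrec fun x : ℕ × ℕ => x.2.unpair := Primrec.unpair.comp Primrec.snd
    exact (Strategy.primrec_removed_label (isPrimrec_columnStrategy hok.primrecRel)).comp
      ((Primrec₂.natPair.comp (Primrec.const e) (Primrec.fst.comp hq)).pair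
        (Primrec.fst.pair (Primrec.snd.comp hq)))
  have hZK : Z ∈ avoiding K := by
    rintro w q ⟨rfl, hq⟩
    exact hZ _ _ _ hq
  obtain ⟨Y, hYK, hYP⟩ := hP K hK ⟨Z, hZK⟩
  obtain ⟨k, hk⟩ := (hok.eventually_node hYP).exists
  obtain ⟨n, s, hs, hYn⟩ := Strategy.exists_halts_mem_cylinder_label
    (S := columnStrategy ok (e.pair (node Y k))) (Y := Y) (by simpa [columnStrategy] using hk)
    (hhalts _) (by simpa [columnStrategy] using node_mem_cylinder Y k)
  exact hYK _ ((node Y k).pair (n.pair s)) (by simpa [K, Strategy.removed] using hs) hYn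

lemma not_genericallyComputable_diagonalSet (hok : IsLimitTest ok P) (hP : IsBasis P) (Z : Set ℕ) :
    ¬GenericallyComputable (diagonalSet ok Z) := by
  rintro ⟨φ, hφ, hdens, hval, hone, hzero⟩
  obtain ⟨code, rfl⟩ := Code.exists_code.1 hφ
  have hcode : ∀ v, columnCode ((Encodable.encode code).pair v) = code := fun v => by
    simp [columnCode]
  have hhalts : ∀ v, ∀ᶠ n in atTop, ∃ s, HaltsOnBlock ((Encodable.encode code).pair v) n s :=
    fun v => (eventually_inter_block_nonempty hdens _).mono fun n ⟨x, hdom, hx⟩ =>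
      exists_haltsOnBlock hx (by rwa [hcode])
  obtain ⟨v, n, s, ⟨x, -, ⟨hxv, hxn⟩, hs⟩, hZ⟩ :=
    exists_haltsOnBlock_mem_cylinder_label hok hP hhalts Z
  obtain ⟨y, hy⟩ := Option.isSome_iff_exists.1 hs
  have hxy : y ∈ code.eval x := hcode v ▸ Code.evaln_sound hy
  have hmem : x ∈ diagonalSet ok Z ↔ 0 ∈ code.eval x := by
    rw [diagonalSet, Set.mem_ofPred_eq, numberLabel, hxv, hxn, hcode]
    exact and_iff_right hZ
  rcases hval x y hxy with rfl | rfl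
  · exact hzero x hxy (hmem.2 hxy)
  · exact one_ne_zero (Part.mem_unique hxy (hmem.1 (hone x hxy)))

lemma genericallyComputes_diagonalSet {D : Set ℕ} {h : ℕ → ℕ} (hok : IsLimitTest ok P)
    (hh : Primrec h) (hP : ∀ X ∈ P, h ⁻¹' X ≠ D) (hZ : h ⁻¹' Z = D) :
    GenericallyComputes D (diagonalSet ok Z) := by
  refine genericallyComputes_of_conflicts (primrec_numberLabel hok.primrecRel) hh
    (density1_of_forall_dvd fun E => ?_) fun x hx =>
      ⟨fun h0 => node_ne_zero Z _ (hx.1.trans h0), fun hconf => hconf.preimage_ne hx.1 hZ⟩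
  have hev : ∀ c, ∀ᶠ n in atTop, (columnStrategy ok c).label n ≠ 0 →
      Conflicts h D ((columnStrategy ok c).label n) := fun c =>
    Strategy.eventually_conflicts_label ((Strategy.primrec_label
      (isPrimrec_columnStrategy hok.primrecRel)).comp (Primrec.const c) Primrec.id)
      hok (fun _ => Iff.rfl) hP
  have hlog : Tendsto (Nat.log 2) atTop atTop :=
    Nat.log_monotone.tendsto_atTop_atTop fun n => ⟨2 ^ n, (Nat.log_pow one_lt_two n).ge⟩
  filter_upwards [hlog.eventually ((eventually_all_finite (Set.finite_Iio E)).2 fun c _ => hev c)]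
    with x hx hxlabel
  rcases eq_or_ne x 0 with rfl | hx0
  · exact dvd_zero _
  · exact (padicValNat_dvd_iff_le hx0).2 (not_lt.1 fun hlt => hxlabel (hx _ hlt))

end Construction

/-- The Turing join `A ⊕ B`. -/
def join (A B : Set ℕ) : Set ℕ := (2 * ·) '' A ∪ (2 * · + 1) '' B

lemma preimage_two_mul_join (A B : Set ℕ) : (2 * ·) ⁻¹' join A B = A := by
  ext i
  simp only [join, Set.mem_preimage, Set.mem_union, Set.mem_image]
  grind

lemma preimage_two_mul_add_one_join (A B : Set ℕ) : (2 * · + 1) ⁻¹' join A B = B := by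
  ext i
  simp only [join, Set.mem_preimage, Set.mem_union, Set.mem_image]
  grind

end GenericComputability

/-- There are no minimal pairs for generic computability: for any nonrecursive sets
`A` and `B` there is a set `C`, not generically computable, which is generically
computable from each of `A` and `B`. -/
theorem no_minimal_pairs_for_generic_computability (A B : Set ℕ)
    (hA : ¬ ComputablePred (· ∈ A)) (hB : ¬ ComputablePred (· ∈ B)) :
    ∃ C : Set ℕ, ¬ GenericallyComputable C ∧
      GenericallyComputes A C ∧ GenericallyComputes B C := by
  open GenericComputability in
  have hh₁ : Primrec fun i => 2 * i := Primrec.nat_mul.comp (Primrec.const 2) Primrec.id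
  have hh₂ : Primrec fun i => 2 * i + 1 := Primrec.succ.comp hh₁
  obtain ⟨okA, hokA⟩ := exists_isLimitTest_preimage_ne hh₁ A
  obtain ⟨okB, hokB⟩ := exists_isLimitTest_preimage_ne hh₂ B
  have hok := hokA.inter hokB
  have hbasis := isBasis_preimage_ne_inter hh₁ hh₂ hA hB
  exact ⟨diagonalSet (fun v n => okA v n ∧ okB v n) (join A B),
    not_genericallyComputable_diagonalSet hok hbasis _,
    genericallyComputes_diagonalSet hok hh₁ (fun _ hX => hX.1) (preimage_two_mul_join A B),
    genericallyComputes_diagonalSet hok hh₂ (fun _ hX => hX.2) (preimage_two_mul_add_one_join A B)⟩
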